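/- Let (M, d) be a locally finite metric space and X an infinite-dimensional real Banach space. Suppose there exist nondecreasing functions ρ₁, ρ₂ : [0,∞) → [0,∞) with lim_{t→∞} ρ₁(t) = ∞ such that for each finite subset N ⊆ M there is a map f_N : N → X satisfying ρ₁(d(u,v)) ≤ ‖f_N(u) − f_N(v)‖ ≤ ρ₂(d(u,v)) for all u, v ∈ N. Then for every ε > 0 there exists a map F : M → X satisfying ρ₁(d(u,v)) ≤ ‖F(u) − F(v)‖ ≤ (3+ε)·ρ₂(d(u,v)) for all u, v ∈ M. -/

import Mathlib

open Filter

/-!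
Let `U` be an ultrafilter on the finite subsets of `M` that refines `atTop`. The number
`δ u v = lim_U ‖f_N u - f_N v‖` is a pseudometric with `ρ₁ (d u v) ≤ δ u v ≤ ρ₂ (d u v)`, and its
balls are finite because `ρ₁ → ∞`. It therefore suffices to find `F` with
`δ ≤ ‖F u - F v‖ ≤ (3 + ε) δ`. After composing with a choice of representatives for the relation
`δ u v = 0`, the maps `f_N` are almost isometric for `δ` on each finite set, for `U`-most `N`.

The map `F` is, up to a factor close to `3`, a barycentric gluing on a logarithmic scale
(`exists_gluing`): with `s x = κ log (1 + δ O x)` and `κ` small, `F x` is the value at time `s x` of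
the piecewise linear path through `f_{i 0} x, f_{i 1} x, …`. For `δ O v ≤ δ O u` write
`F u - F v = (F_{s u} u - F_{s u} v) + (F_{s u} v - F_{s v} v)`.
The second bracket is at most a constant times `κ δ u v`, since the path of `v` has speed
`O(δ O v)` while `s u - s v ≤ κ δ u v / (1 + δ O v)`. The first bracket is a convex combination
`(1 - t) w + t w'` of two vectors of norm about `δ u v`, which gives the upper bound.

The lower bound `‖(1 - t) w + t w'‖ ≥ (1/3 - η) δ u v` holds when the indices `i n` are chosen
generically (`eventually_le_norm_combo`). Otherwise there would be a sequence `w 0, w 1, …` of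
vectors of norm about `d` such that `‖(1 - t) w i + t w j‖ < c < d / 3` for all `i < j`.
Averaging over consecutive pairs shows that long averages `A` of the `w j` have norm at most
`c + o(1)`, and averaging over one index only bounds `(1 - t) w 0 + t A` and `(1 - t) A + t w m` by
`c`; whichever of `t`, `1 - t` is at least `1/2` then forces `d ≤ 3 c + o(1)`.
-/

section Helpers

variable {X : Type*} [NormedAddCommGroup X] [NormedSpace ℝ X]

/-- The constant `3` of the theorem comes from here: if the convex combinations
`(1 - t) w i + t w j`, `i < j`, of a bounded sequence all have norm at most `c`, then the vectors
`w i` cannot all be longer than `3 c`. -/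
lemma exists_norm_le_three_mul (w : ℕ → X) (c D l t : ℝ) (ht0 : 0 ≤ t) (ht1 : t ≤ 1)
    (hD : ∀ n, ‖w n‖ ≤ D) (hl : ∀ n, l ≤ ‖w n‖)
    (hc : ∀ i j, i < j → ‖(1 - t) • w i + t • w j‖ ≤ c) : l ≤ 3 * c := by
  by_contra! hlt
  have hc0 : 0 ≤ c := (norm_nonneg _).trans (hc 0 1 one_pos)
  have hD0 : 0 ≤ D := (norm_nonneg _).trans (hD 0)
  have hsum : ∀ (k : ℕ) (g : ℕ → X), (∀ j, j < k → ‖g j‖ ≤ c) →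
      ‖∑ j ∈ Finset.range k, g j‖ ≤ k * c := by
    intro k g hg
    refine (norm_sum_le_of_le _ (fun j hj => hg j (Finset.mem_range.1 hj))).trans ?_
    simp
  have key : ∀ k : ℕ, k * ((1 - t) * l - c * (1 + t)) ≤ 2 * D ∧
      k * (t * l - c * (2 - t)) ≤ 2 * D := by
    intro k
    set S : X := ∑ j ∈ Finset.range k, w (j + 1) with hS
    have h1 : ‖S + t • (w (k + 1) - w 1)‖ ≤ k * c := by
      have h := hsum k (fun j => (1 - t) • w (j + 1) + t • w (j + 2))
        (fun j _ => hc _ _ (by omega))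
      have e : ∑ j ∈ Finset.range k, ((1 - t) • w (j + 1) + t • w (j + 2))
          = S + t • (w (k + 1) - w 1) := by
        have e2 := Finset.sum_range_sub (fun j => w (j + 1)) k
        rw [hS, ← e2, Finset.smul_sum, ← Finset.sum_add_distrib]
        refine Finset.sum_congr rfl fun j _ => ?_
        module
      rwa [e] at h
    have hdiff : ‖w (k + 1) - w 1‖ ≤ 2 * D := by
      have := norm_sub_le (w (k + 1)) (w 1)
      linarith [hD (k + 1), hD 1]
    have h2 : ‖S‖ ≤ k * c + 2 * D := by
      have e : S = (S + t • (w (k + 1) - w 1)) - t • (w (k + 1) - w 1) := by abel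
      have h3 : ‖t • (w (k + 1) - w 1)‖ ≤ 2 * D := by
        rw [norm_smul, Real.norm_of_nonneg ht0]
        nlinarith [norm_nonneg (w (k + 1) - w 1)]
      rw [e]
      exact (norm_sub_le _ _).trans (add_le_add h1 h3)
    have hk0 : (0 : ℝ) ≤ k := Nat.cast_nonneg k
    constructor
    · have h := hsum k (fun j => (1 - t) • w 0 + t • w (j + 1)) (fun j _ => hc _ _ (by omega))
      rw [Finset.sum_add_distrib, Finset.sum_const, Finset.card_range, ← Finset.smul_sum, ← hS,
        ← Nat.cast_smul_eq_nsmul ℝ, smul_smul] at h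
      have h4 := norm_sub_le (((k : ℝ) * (1 - t)) • w 0 + t • S) (t • S)
      rw [add_sub_cancel_right, norm_smul, norm_smul, Real.norm_of_nonneg ht0,
        Real.norm_of_nonneg (mul_nonneg hk0 (by linarith))] at h4
      have h5 : (k : ℝ) * (1 - t) * l ≤ k * (1 - t) * ‖w 0‖ :=
        mul_le_mul_of_nonneg_left (hl 0) (mul_nonneg hk0 (by linarith))
      have h6 : t * ‖S‖ ≤ t * (k * c + 2 * D) := mul_le_mul_of_nonneg_left h2 ht0
      nlinarith
    · have h := hsum k (fun j => (1 - t) • w (j + 1) + t • w (k + 1))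
        (fun j hj => hc _ _ (by omega))
      rw [Finset.sum_add_distrib, ← Finset.smul_sum, ← hS, Finset.sum_const,
        Finset.card_range, ← Nat.cast_smul_eq_nsmul ℝ, smul_smul] at h
      have h4 := norm_sub_le ((1 - t) • S + ((k : ℝ) * t) • w (k + 1)) ((1 - t) • S)
      rw [add_sub_cancel_left, norm_smul, norm_smul,
        Real.norm_of_nonneg (by linarith : 0 ≤ 1 - t),
        Real.norm_of_nonneg (mul_nonneg hk0 ht0)] at h4
      have h5 : (k : ℝ) * t * l ≤ k * t * ‖w (k + 1)‖ :=
        mul_le_mul_of_nonneg_left (hl _) (mul_nonneg hk0 ht0)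
      have h6 : (1 - t) * ‖S‖ ≤ (1 - t) * (k * c + 2 * D) :=
        mul_le_mul_of_nonneg_left h2 (by linarith)
      nlinarith
  rcases le_total t (1 / 2) with h | h
  · have hpos : 0 < (1 - t) * l - c * (1 + t) := by nlinarith
    obtain ⟨k, hk⟩ := exists_nat_gt (2 * D / ((1 - t) * l - c * (1 + t)))
    rw [div_lt_iff₀ hpos] at hk
    linarith [(key k).1]
  · have hpos : 0 < t * l - c * (2 - t) := by nlinarith
    obtain ⟨k, hk⟩ := exists_nat_gt (2 * D / (t * l - c * (2 - t)))
    rw [div_lt_iff₀ hpos] at hk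
    linarith [(key k).2]

/-- A convex combination of two generic members (one chosen after the other) of a family whose norms
converge to `d` along an ultrafilter has norm at least any prescribed `c < d / 3`. -/
lemma eventually_le_norm_combo {I : Type*} (U : Ultrafilter I) (w : I → X) (d c t : ℝ)
    (hw : Tendsto (fun i => ‖w i‖) U (nhds d)) (ht0 : 0 ≤ t) (ht1 : t ≤ 1) (hc : 3 * c < d) :
    ∀ᶠ i in U, ∀ᶠ j in U, c ≤ ‖(1 - t) • w i + t • w j‖ := by
  by_contra hcon
  have h1 : ∀ᶠ i in U, ∀ᶠ j in U, ‖(1 - t) • w i + t • w j‖ < c := by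
    refine (Ultrafilter.eventually_not.2 hcon).mono fun i hi => ?_
    exact (Ultrafilter.eventually_not.2 hi).mono fun j hj => not_le.1 hj
  obtain ⟨l, hcl, hld⟩ := exists_between hc
  have hl : ∀ᶠ i in U, l < ‖w i‖ := hw.eventually_const_lt hld
  have hD : ∀ᶠ i in U, ‖w i‖ < d + 1 := hw.eventually_lt_const (by linarith)
  obtain ⟨x, hx, hr⟩ := exists_seq_of_forall_finset_exists
    (fun i => l < ‖w i‖ ∧ ‖w i‖ < d + 1 ∧ ∀ᶠ j in U, ‖(1 - t) • w i + t • w j‖ < c)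
    (fun i j => ‖(1 - t) • w i + t • w j‖ < c) (by
      intro s hs
      have hall : ∀ᶠ j in (U : Filter I), ∀ i ∈ s, ‖(1 - t) • w i + t • w j‖ < c :=
        (Filter.eventually_all_finset s).2 fun i hi => (hs i hi).2.2
      obtain ⟨y, hy⟩ := (((hl.and hD).and h1).and hall).exists
      exact ⟨y, ⟨hy.1.1.1, hy.1.1.2, hy.1.2⟩, hy.2⟩)
  have := exists_norm_le_three_mul (fun n => w (x n)) c (d + 1) l t ht0 ht1
    (fun n => (hx n).2.1.le) (fun n => (hx n).1.le) (fun i j hij => (hr i j hij).le)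
  linarith

/-- The value at time `s ≥ 0` of the piecewise linear path that is at `g n` at time `n`. -/
noncomputable def interp (g : ℕ → X) (s : ℝ) : X :=
  (1 - (s - ⌊s⌋₊)) • g ⌊s⌋₊ + (s - ⌊s⌋₊) • g (⌊s⌋₊ + 1)

lemma norm_interp_sub_le (g : ℕ → X) (D a b : ℝ) (ha : 0 ≤ a) (hab : a ≤ b)
    (hg : ∀ n, ⌊a⌋₊ ≤ n → ‖g (n + 1) - g n‖ ≤ D) :
    ‖interp g b - interp g a‖ ≤ D * (b - a) := by
  have hb : 0 ≤ b := ha.trans hab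
  have hfa := Nat.floor_le ha
  have hfb := Nat.floor_le hb
  have hfa' := Nat.lt_floor_add_one a
  have hfab : ⌊a⌋₊ ≤ ⌊b⌋₊ := Nat.floor_mono hab
  rcases hfab.eq_or_lt with h | h
  · have e : interp g b - interp g a = (b - a) • (g (⌊a⌋₊ + 1) - g ⌊a⌋₊) := by
      unfold interp
      rw [← h]
      module
    rw [e, norm_smul, Real.norm_of_nonneg (by linarith), mul_comm]
    exact mul_le_mul_of_nonneg_right (hg _ le_rfl) (by linarith)
  · have hint : ∀ m : ℕ, ⌊a⌋₊ + 1 ≤ m → ‖g m - interp g a‖ ≤ D * (m - a) := by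
      intro m hm
      induction m, hm using Nat.le_induction with
      | base =>
        have e : g (⌊a⌋₊ + 1) - interp g a
            = (1 - (a - ⌊a⌋₊)) • (g (⌊a⌋₊ + 1) - g ⌊a⌋₊) := by
          unfold interp
          module
        rw [e, norm_smul, Real.norm_of_nonneg (by linarith)]
        have := mul_le_mul_of_nonneg_left (hg _ le_rfl)
          (by linarith : 0 ≤ 1 - (a - (⌊a⌋₊ : ℝ)))
        push_cast
        linarith
      | succ m hm ih =>
        have h1 := norm_add_le (g (m + 1) - g m) (g m - interp g a)
        rw [sub_add_sub_cancel] at h1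
        have h2 := hg m (by omega)
        push_cast
        linarith
    have h1 := hint ⌊b⌋₊ h
    have e : interp g b - g ⌊b⌋₊ = (b - ⌊b⌋₊) • (g (⌊b⌋₊ + 1) - g ⌊b⌋₊) := by
      unfold interp
      module
    have h2 : ‖interp g b - g ⌊b⌋₊‖ ≤ D * (b - ⌊b⌋₊) := by
      rw [e, norm_smul, Real.norm_of_nonneg (by linarith), mul_comm]
      exact mul_le_mul_of_nonneg_right (hg _ hfab) (by linarith)
    have h3 := norm_add_le (interp g b - g ⌊b⌋₊) (g ⌊b⌋₊ - interp g a)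
    rw [sub_add_sub_cancel] at h3
    linarith

/-- A sequence of indices in which each term satisfies its own generic condition `A n` and each
consecutive pair satisfies a condition `Q n` that is generic in the iterated sense. -/
lemma exists_seq_of_eventually_eventually {I : Type*} (U : Ultrafilter I)
    (A : ℕ → I → Prop) (Q : ℕ → I → I → Prop) (hA : ∀ n, ∀ᶠ i in U, A n i)
    (hQ : ∀ n, ∀ᶠ i in U, ∀ᶠ j in U, Q n i j) :
    ∃ x : ℕ → I, ∀ n, A n (x n) ∧ Q n (x n) (x (n + 1)) := by
  have step : ∀ n (i : {i // A n i ∧ ∀ᶠ j in U, Q n i j}),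
      ∃ i' : {i // A (n + 1) i ∧ ∀ᶠ j in U, Q (n + 1) i j}, Q n i i' := by
    rintro n ⟨i, hi⟩
    obtain ⟨y, hy⟩ := ((hi.2.and (hA (n + 1))).and (hQ (n + 1))).exists
    exact ⟨⟨y, hy.1.2, hy.2⟩, hy.1.1⟩
  choose next hnext using step
  obtain ⟨y, hy⟩ := ((hA 0).and (hQ 0)).exists
  let x : (n : ℕ) → {i // A n i ∧ ∀ᶠ j in U, Q n i j} :=
    fun n => Nat.rec ⟨y, hy⟩ (fun n i => next n i) n
  exact ⟨fun n => (x n).1, fun n => ⟨(x n).2.1, hnext n (x n)⟩⟩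

/-- Logarithmic gluing of maps `f i` that are asymptotically isometric for `δ`. The hypothesis `h0`
replaces the separation axiom for the pseudometric `δ`, so that multiplicative estimates make
sense. -/
lemma exists_gluing {M I : Type*} (U : Ultrafilter I) (f : I → M → X) (δ : M → M → ℝ) (O : M)
    (hδ : ∀ u v, Tendsto (fun i => ‖f i u - f i v‖) U (nhds (δ u v)))
    (h0 : ∀ u v, δ u v = 0 → ∀ i, f i u = f i v) (hO : ∀ i, f i O = 0)
    (hball : ∀ r : ℝ, {x | δ O x ≤ r}.Finite) (e : ℝ) (he : 0 < e) (he1 : e ≤ 1) :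
    ∃ F : M → X, ∀ u v, (1 / 3 - e) * δ u v ≤ ‖F u - F v‖ ∧ ‖F u - F v‖ ≤ (1 + e) * δ u v := by
  have hnn : ∀ u v, 0 ≤ δ u v := fun u v => ge_of_tendsto' (hδ u v) fun i => norm_nonneg _
  have hsymm : ∀ u v, δ u v = δ v u := fun u v =>
    tendsto_nhds_unique (hδ u v) (by simpa only [norm_sub_rev] using hδ v u)
  have htri : ∀ u v w, δ u w ≤ δ u v + δ v w := fun u v w =>
    le_of_tendsto_of_tendsto' (hδ u w) ((hδ u v).add (hδ v w))
      fun i => norm_sub_le_norm_sub_add_norm_sub _ _ _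
  set κ : ℝ := e / 8 with hκ
  have hκ0 : 0 < κ := by positivity
  set s : M → ℝ := fun x => κ * Real.log (1 + δ O x) with hs
  have hs0 : ∀ x, 0 ≤ s x := fun x =>
    mul_nonneg hκ0.le (Real.log_nonneg (by linarith [hnn O x]))
  have hsmono : ∀ x y, δ O x ≤ δ O y → s x ≤ s y := fun x y h =>
    mul_le_mul_of_nonneg_left (Real.log_le_log (by linarith [hnn O x]) (by linarith)) hκ0.le
  have hB : ∀ n : ℕ, {x | ⌊s x⌋₊ ≤ n}.Finite := by
    intro n
    refine (hball (Real.exp ((n + 1) / κ))).subset fun x hx => ?_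
    have h1 : s x < n + 1 := (Nat.lt_floor_add_one _).trans_le (by
      have : (⌊s x⌋₊ : ℝ) ≤ n := by exact_mod_cast hx
      linarith)
    have h2 : Real.log (1 + δ O x) < (n + 1) / κ := by
      rw [lt_div_iff₀ hκ0, mul_comm]
      exact h1
    have h3 := (Real.log_lt_iff_lt_exp (by linarith [hnn O x])).1 h2
    change δ O x ≤ _
    linarith
  have hfr0 : ∀ x, 0 ≤ s x - ⌊s x⌋₊ := fun x => sub_nonneg.2 (Nat.floor_le (hs0 x))
  have hfr1 : ∀ x, s x - ⌊s x⌋₊ ≤ 1 := fun x => by linarith [Nat.lt_floor_add_one (s x)]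
  -- The weights in the lower bound are only those attained by points of a finite ball, so no
  -- uniformity over all weights is needed.
  obtain ⟨x, hx⟩ := exists_seq_of_eventually_eventually U
    (fun n i => ∀ u ∈ {x | ⌊s x⌋₊ ≤ n}, ∀ v ∈ {x | ⌊s x⌋₊ ≤ n},
      ‖f i u - f i v‖ ≤ (1 + e / 2) * δ u v)
    (fun n i j => ∀ u ∈ {x | ⌊s x⌋₊ ≤ n}, ∀ v ∈ {x | ⌊s x⌋₊ ≤ n},
      (1 / 3 - e / 2) * δ u v ≤ ‖(1 - (s u - ⌊s u⌋₊)) • (f i u - f i v)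
        + (s u - ⌊s u⌋₊) • (f j u - f j v)‖)
    (by
      intro n
      refine (Filter.eventually_all_finite (hB n)).2 fun u _ =>
        (Filter.eventually_all_finite (hB n)).2 fun v _ => ?_
      rcases (hnn u v).eq_or_lt with h | h
      · exact Filter.Eventually.of_forall fun i => by simp [h0 u v h.symm i, ← h]
      · exact ((hδ u v).eventually_lt_const (by nlinarith)).mono fun i hi => hi.le)
    (by
      intro n
      simp only [Filter.eventually_all_finite (hB n)]
      intro u _ v _
      rcases (hnn u v).eq_or_lt with h | h
      · refine Filter.Eventually.of_forall fun i => Filter.Eventually.of_forall fun j => ?_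
        rw [← h, mul_zero]
        exact norm_nonneg _
      · exact eventually_le_norm_combo U (fun i => f i u - f i v) _ _ _ (hδ u v)
          (hfr0 u) (hfr1 u) (by nlinarith))
  have hup : ∀ n u v, ⌊s u⌋₊ ≤ n → ⌊s v⌋₊ ≤ n →
      ‖f (x n) u - f (x n) v‖ ≤ (1 + e / 2) * δ u v := fun n u v hu hv => (hx n).1 u hu v hv
  refine ⟨fun u => interp (fun n => f (x n) u) (s u), ?_⟩
  have main : ∀ u v, δ O v ≤ δ O u →
      (1 / 3 - e) * δ u v ≤ ‖interp (fun n => f (x n) u) (s u) - interp (fun n => f (x n) v) (s v)‖ ∧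
      ‖interp (fun n => f (x n) u) (s u) - interp (fun n => f (x n) v) (s v)‖
        ≤ (1 + e) * δ u v := by
    intro u v huv
    have hsuv := hsmono v u huv
    have hfl : ⌊s v⌋₊ ≤ ⌊s u⌋₊ := Nat.floor_mono hsuv
    have hsO : ⌊s O⌋₊ ≤ ⌊s v⌋₊ := by
      refine Nat.floor_mono (hsmono O v ?_)
      have : δ O O = 0 := tendsto_nhds_unique (hδ O O) (by simp)
      rw [this]
      exact hnn O v
    have hfv : ∀ n, ⌊s v⌋₊ ≤ n → ‖f (x n) v‖ ≤ 2 * δ O v := by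
      intro n hn
      have := hup n v O hn (hsO.trans hn)
      rw [hO, sub_zero, hsymm] at this
      nlinarith [hnn O v]
    have hlip := norm_interp_sub_le (fun n => f (x n) v) (4 * δ O v) (s v) (s u) (hs0 v) hsuv
      (fun n hn => by
        have h1 := norm_sub_le (f (x (n + 1)) v) (f (x n) v)
        linarith [hfv n hn, hfv (n + 1) (by omega)])
    have hds : (1 + δ O v) * (s u - s v) ≤ κ * δ u v := by
      have hv1 : 0 < 1 + δ O v := by linarith [hnn O v]
      have hu1 : 0 < 1 + δ O u := by linarith [hnn O u]
      have h1 : Real.log (1 + δ O u) - Real.log (1 + δ O v)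
          ≤ (1 + δ O u) / (1 + δ O v) - 1 := by
        rw [← Real.log_div hu1.ne' hv1.ne']
        exact Real.log_le_sub_one_of_pos (div_pos hu1 hv1)
      have h2 : (1 + δ O v) * ((1 + δ O u) / (1 + δ O v) - 1) = δ O u - δ O v := by
        field_simp
        ring
      have h3 : δ O u - δ O v ≤ δ u v := by linarith [htri O v u, hsymm u v]
      have h4 := mul_le_mul_of_nonneg_left h1 hv1.le
      rw [h2] at h4
      have h5 := mul_le_mul_of_nonneg_left (h4.trans h3) hκ0.le
      have h6 : (1 + δ O v) * (s u - s v)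
          = κ * ((1 + δ O v) * (Real.log (1 + δ O u) - Real.log (1 + δ O v))) := by
        simp only [hs]
        ring
      rw [h6]
      exact h5
    have herr : ‖interp (fun n => f (x n) v) (s u) - interp (fun n => f (x n) v) (s v)‖
        ≤ e / 2 * δ u v := by
      have h4 : 4 * (κ * δ u v) = e / 2 * δ u v := by
        rw [hκ]
        ring
      linarith
    set t : ℝ := s u - ⌊s u⌋₊ with ht
    set n : ℕ := ⌊s u⌋₊ with hn
    have heq : interp (fun n => f (x n) u) (s u) - interp (fun n => f (x n) v) (s u)
        = (1 - t) • (f (x n) u - f (x n) v) + t • (f (x (n + 1)) u - f (x (n + 1)) v) := by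
      simp only [interp, ← hn, ← ht]
      module
    have hlow : (1 / 3 - e / 2) * δ u v
        ≤ ‖interp (fun n => f (x n) u) (s u) - interp (fun n => f (x n) v) (s u)‖ := by
      rw [heq]
      exact (hx n).2 u (le_refl n) v hfl
    have hhigh : ‖interp (fun n => f (x n) u) (s u) - interp (fun n => f (x n) v) (s u)‖
        ≤ (1 + e / 2) * δ u v := by
      rw [heq]
      refine (norm_add_le _ _).trans ?_
      have ht0 : 0 ≤ t := hfr0 u
      have ht1 : 0 ≤ 1 - t := sub_nonneg.2 (hfr1 u)
      rw [norm_smul, norm_smul, Real.norm_of_nonneg ht0, Real.norm_of_nonneg ht1]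
      have h1 := mul_le_mul_of_nonneg_left (hup n u v le_rfl hfl) ht1
      have h2 := mul_le_mul_of_nonneg_left
        (hup (n + 1) u v (Nat.le_succ n) (hfl.trans (Nat.le_succ n))) ht0
      linarith
    set a := interp (fun n => f (x n) u) (s u)
    set b := interp (fun n => f (x n) v) (s u)
    set c := interp (fun n => f (x n) v) (s v)
    have h1 := norm_sub_le_norm_sub_add_norm_sub a b c
    have h2 := norm_sub_le_norm_sub_add_norm_sub a c b
    rw [norm_sub_rev c b] at h2
    constructor <;> linarith
  intro u v
  rcases le_total (δ O v) (δ O u) with h | h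
  · exact main u v h
  · have := main v u h
    rw [hsymm v u, norm_sub_rev] at this
    exact this

end Helpers

/-- **Corollary (finite determination of coarse embeddability).**
Let `M` be a locally finite metric space, `X` an infinite-dimensional real Banach space,
and `ρ₁, ρ₂ : [0,∞) → [0,∞)` nondecreasing with `ρ₁(t) → ∞`.  If every finite subset
`N ⊆ M` admits a map `f_N : N → X` with
`ρ₁(d(u,v)) ≤ ‖f_N u - f_N v‖ ≤ ρ₂(d(u,v))`, then for every `ε > 0` there is a map
`F : M → X` with `ρ₁(d(u,v)) ≤ ‖F u - F v‖ ≤ (3+ε) ρ₂(d(u,v))` on all of `M`. -/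
theorem finite_determination_coarse
    (M : Type*) [MetricSpace M]
    (hM : ∀ (x : M) (r : ℝ), {y : M | dist x y ≤ r}.Finite)
    (X : Type*) [NormedAddCommGroup X] [NormedSpace ℝ X] [CompleteSpace X]
    (hX : ¬ FiniteDimensional ℝ X)
    (ρ₁ ρ₂ : ℝ → ℝ)
    (hρ₁pos : ∀ t : ℝ, 0 ≤ t → 0 ≤ ρ₁ t)
    (hρ₂pos : ∀ t : ℝ, 0 ≤ t → 0 ≤ ρ₂ t)
    (hρ₁mono : MonotoneOn ρ₁ (Set.Ici 0))
    (hρ₂mono : MonotoneOn ρ₂ (Set.Ici 0))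
    (hρ₁lim : Tendsto ρ₁ atTop atTop)
    (hfin : ∀ N : Finset M, ∃ f : N → X, ∀ u v : N,
      ρ₁ (dist (u : M) (v : M)) ≤ ‖f u - f v‖ ∧
        ‖f u - f v‖ ≤ ρ₂ (dist (u : M) (v : M)))
    (ε : ℝ) (hε : 0 < ε) :
    ∃ F : M → X, ∀ u v : M,
      ρ₁ (dist u v) ≤ ‖F u - F v‖ ∧ ‖F u - F v‖ ≤ (3 + ε) * ρ₂ (dist u v) := by
  classical
  rcases isEmpty_or_nonempty M with hM' | ⟨⟨O⟩⟩
  · exact ⟨fun u => hM'.elim u, fun u => hM'.elim u⟩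
  choose f hf using hfin
  let U : Ultrafilter (Finset M) := Ultrafilter.of atTop
  let g : Finset M → M → X := fun N u => if h : u ∈ N then f N ⟨u, h⟩ else 0
  have hg : ∀ u v, ∀ᶠ N in U, ‖g N u - g N v‖ ∈ Set.Icc (ρ₁ (dist u v)) (ρ₂ (dist u v)) := by
    intro u v
    refine Ultrafilter.of_le atTop ((eventually_ge_atTop {u, v}).mono fun N hN => ?_)
    have hu : u ∈ N := hN (by simp)
    have hv : v ∈ N := hN (by simp)
    have h := hf N ⟨u, hu⟩ ⟨v, hv⟩
    simp only [g, hu, hv, dif_pos]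
    exact h
  have hlim : ∀ u v, ∃ d ∈ Set.Icc (ρ₁ (dist u v)) (ρ₂ (dist u v)),
      Tendsto (fun N => ‖g N u - g N v‖) U (nhds d) := fun u v =>
    isCompact_Icc.ultrafilter_le_nhds (U.map fun N => ‖g N u - g N v‖)
      (le_principal_iff.2 (hg u v))
  choose δ hδmem hδ using hlim
  have hnn : ∀ u v, 0 ≤ δ u v := fun u v => ge_of_tendsto' (hδ u v) fun i => norm_nonneg _
  have hsymm : ∀ u v, δ u v = δ v u := fun u v =>
    tendsto_nhds_unique (hδ u v) (by simpa only [norm_sub_rev] using hδ v u)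
  have htri : ∀ u v w, δ u w ≤ δ u v + δ v w := fun u v w =>
    le_of_tendsto_of_tendsto' (hδ u w) ((hδ u v).add (hδ v w))
      fun i => norm_sub_le_norm_sub_add_norm_sub _ _ _
  -- Representatives of the classes of points at `δ`-distance `0`.
  let S : Setoid M :=
    { r := fun u v => δ u v = 0
      iseqv := ⟨fun u => tendsto_nhds_unique (hδ u u) (by simp),
        fun {u v} h => (hsymm v u).trans h,
        fun {u v w} h h' => le_antisymm (by linarith [htri u v w]) (hnn u w)⟩ }
  let r : M → M := fun u => (Quotient.mk S u).out
  have hr : ∀ u, δ (r u) u = 0 := fun u => Quotient.mk_out (s := S) u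
  have hr' : ∀ u v, δ u v = 0 → r u = r v := fun u v h =>
    congrArg Quotient.out (Quotient.sound (s := S) h)
  have hrδ : ∀ u v, δ (r u) (r v) = δ u v := fun u v => by
    have h1 := htri (r u) u (r v)
    have h2 := htri u v (r v)
    have h3 := htri u (r u) v
    have h4 := htri (r u) (r v) v
    have h5 := hsymm u (r u)
    have h6 := hsymm v (r v)
    exact le_antisymm (by linarith [hr u, hr v]) (by linarith [hr u, hr v])
  have hball : ∀ R : ℝ, {x | δ O x ≤ R}.Finite := by
    intro R
    obtain ⟨T, hT⟩ := eventually_atTop.1 (hρ₁lim.eventually_gt_atTop R)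
    refine (hM O T).subset fun x hx => ?_
    change dist O x ≤ T
    by_contra! hlt
    exact absurd ((hδmem O x).1.trans hx) (not_le.2 (hT _ hlt.le))
  -- `e` solves `(3 + ε) * (1 / 3 - e) = 1 + e`.
  set e : ℝ := ε / (3 * (4 + ε)) with he
  have he0 : 0 < e := by positivity
  have hee : e * (3 * (4 + ε)) = ε := div_mul_cancel₀ _ (by positivity)
  have he1 : e ≤ 1 := by nlinarith
  obtain ⟨F, hF⟩ := exists_gluing U (fun N u => g N (r u) - g N (r O)) δ O
    (fun u v => by
      have := hδ (r u) (r v)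
      rw [hrδ] at this
      simpa only [sub_sub_sub_cancel_right] using this)
    (fun u v h i => by simp only [hr' u v h]) (fun i => sub_self _) hball e he0 he1
  have he1' : 0 < 1 + e := by linarith
  refine ⟨fun u => ((3 + ε) / (1 + e)) • F u, fun u v => ?_⟩
  have hc : 0 ≤ (3 + ε) / (1 + e) := by positivity
  rw [← smul_sub, norm_smul, Real.norm_of_nonneg hc]
  constructor
  · have h1 := mul_le_mul_of_nonneg_left (hF u v).1 hc
    have h2 : (3 + ε) / (1 + e) * ((1 / 3 - e) * δ u v) = δ u v := by
      have : (3 + ε) * (1 / 3 - e) = 1 + e := by linarith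
      rw [← mul_assoc, div_mul_eq_mul_div, this, div_self he1'.ne', one_mul]
    linarith [(hδmem u v).1]
  · have h1 := mul_le_mul_of_nonneg_left (hF u v).2 hc
    have h2 : (3 + ε) / (1 + e) * ((1 + e) * δ u v) = (3 + ε) * δ u v := by
      rw [← mul_assoc, div_mul_cancel₀ _ he1'.ne']
    have h3 := mul_le_mul_of_nonneg_left (hδmem u v).2 (by linarith : 0 ≤ 3 + ε)
    linarith
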